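/- Suppose the distributional preference ≿ satisfies the upper-bound property and the maximizer property, and let π be a priority ranking on 𝒮. Then any choice rule Ch that is non-wasteful, promotes the distributional preference, and guarantees no justified envy with respect to π satisfies consistency: for every S ⊆ 𝒮 and s ∈ S with s ∉ Ch(S), we have Ch(S \ {s}) = Ch(S). -/

import Mathlib

open Finset

variable {α : Type*}

/-- Strict part of a distributional preference. -/
def strictPref (pref : Finset α → Finset α → Prop) (A B : Finset α) : Prop :=
  pref A B ∧ ¬ pref B A

/-- Indifference part of a distributional preference. -/
def indiffPref (pref : Finset α → Finset α → Prop) (A B : Finset α) : Prop :=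
  pref A B ∧ pref B A

/-- Incomparability under a distributional preference. -/
def incomparable (pref : Finset α → Finset α → Prop) (A B : Finset α) : Prop :=
  ¬ pref A B ∧ ¬ pref B A

/-- `NW q S` is the collection of non-wasteful subsets of `S`. -/
def NW (q : ℕ) (S : Finset α) : Set (Finset α) :=
  {T | T ⊆ S ∧ T.card = min q S.card}

/-- The frontier of `S`: non-wasteful subsets undominated w.r.t. the preference. -/
def frontierSet (pref : Finset α → Finset α → Prop) (q : ℕ) (S : Finset α) :
    Set (Finset α) :=
  {T | T ∈ NW q S ∧ ∀ T' ∈ NW q S, ¬ strictPref pref T' T}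

/-- The upper-bound property of a distributional preference. -/
def upperBoundProperty [DecidableEq α] (pref : Finset α → Finset α → Prop) (q : ℕ) : Prop :=
  ∀ S S' : Finset α, S.card = q → S'.card = q → incomparable pref S S' →
    ∃ S'' ∈ NW q (S ∪ S'), strictPref pref S'' S ∨ strictPref pref S'' S'

/-- The maximizer property of a distributional preference. -/
def maximizerProperty [DecidableEq α] (pref : Finset α → Finset α → Prop) (q : ℕ) : Prop :=
  ∀ S S' : Finset α, S ≠ S' → S.card = q → S'.card = q →
    (∀ S'' ∈ NW q (S ∪ S'), pref S S'' ∧ pref S' S'') →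
    ∃ s ∈ S \ S', ∃ s' ∈ S' \ S,
      indiffPref pref (S.erase s ∪ {s'}) S ∧ indiffPref pref (S'.erase s' ∪ {s}) S'

/-- The improvement property of a distributional preference. -/
def improvementProperty [DecidableEq α] (pref : Finset α → Finset α → Prop) (q : ℕ) : Prop :=
  ∀ S S' : Finset α, S.card = q → S'.card = q → ∀ s ∈ S \ S',
    (∀ S'' ∈ NW q (S ∪ S'), s ∉ S'' → strictPref pref S S'') →
    (∀ S'' ∈ NW q (S ∪ S'), s ∈ S'' → pref S S'') →
    ∃ s' ∈ S' \ S, strictPref pref (S'.erase s' ∪ {s}) S'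

/-- A choice rule is non-wasteful. -/
def nonWasteful (q : ℕ) (Ch : Finset α → Finset α) : Prop :=
  ∀ S : Finset α, (Ch S).card = min q S.card

/-- A choice rule promotes the distributional preference. -/
def promotesPref (pref : Finset α → Finset α → Prop) (Ch : Finset α → Finset α) : Prop :=
  ∀ S : Finset α, ∀ S' ⊆ S, S'.card = (Ch S).card → ¬ strictPref pref S' (Ch S)

/-- A choice rule guarantees no justified envy with respect to priority ranking `π`. -/
def noJustifiedEnvy [DecidableEq α] (pref : Finset α → Finset α → Prop)
    (π : α → α → Prop) (Ch : Finset α → Finset α) : Prop :=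
  ∀ S : Finset α, ∀ s ∈ Ch S, ∀ s' ∈ S \ Ch S,
    pref ((Ch S).erase s ∪ {s'}) (Ch S) → π s s'

/-- Path independence of a choice rule. -/
def pathIndependent [DecidableEq α] (Ch : Finset α → Finset α) : Prop :=
  ∀ S S' : Finset α, Ch (S ∪ S') = Ch (Ch S ∪ S')

/-- Consistency of a choice rule. -/
def consistentRule [DecidableEq α] (Ch : Finset α → Finset α) : Prop :=
  ∀ S : Finset α, ∀ s ∈ S, s ∉ Ch S → Ch (S.erase s) = Ch S

/-- Substitutability of a choice rule. -/
def substitutableRule [DecidableEq α] (Ch : Finset α → Finset α) : Prop :=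
  ∀ S : Finset α, ∀ s ∈ S, ∀ s' ∈ S, s ≠ s' → s ∈ Ch S → s ∈ Ch (S.erase s')

/-- `l` lists the elements of `A` in strictly decreasing `π`-priority. -/
def descList [DecidableEq α] (π : α → α → Prop) (A : Finset α) (l : List α) : Prop :=
  l.Pairwise π ∧ l.Nodup ∧ l.toFinset = A

/-- `A` priority dominates `B` with respect to `π`. -/
def priorityDominates [DecidableEq α] (π : α → α → Prop) (A B : Finset α) : Prop :=
  B.card ≤ A.card ∧
  ∀ la lb : List α, descList π A la → descList π B lb →
    ∀ (k : ℕ) (ha : k < la.length) (hb : k < lb.length),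
      la.get ⟨k, ha⟩ = lb.get ⟨k, hb⟩ ∨ π (la.get ⟨k, ha⟩) (lb.get ⟨k, hb⟩)

/-- The revealed preference axiom for a choice rule: no revealed-priority cycles. -/
def revealedPrefAxiom [DecidableEq α] (pref : Finset α → Finset α → Prop)
    (Ch : Finset α → Finset α) : Prop :=
  ¬ ∃ (K : ℕ) (s : ℕ → α) (T : ℕ → Finset α), 0 < K ∧ s K = s 0 ∧
    ∀ k < K, s k ∈ Ch (T k) ∧ s (k + 1) ∈ T k \ Ch (T k) ∧
      pref ((Ch (T k)).erase (s k) ∪ {s (k + 1)}) (Ch (T k))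

/-!
By transitivity and finiteness, the upper-bound property makes every undominated non-wasteful
subset of a set with at least `q` elements weakly better than all the others. If a pool `S` of that
size shrinks to some `S'` that still contains `Ch S`, then both `Ch S` and `Ch S'` are therefore
best among the non-wasteful subsets of `Ch S ∪ Ch S'`. Were they distinct, the maximizer property
would provide `s ∈ Ch S \ Ch S'` and `s' ∈ Ch S' \ Ch S` whose exchange is indifferent in both
directions, and the absence of justified envy would rank each of `s` and `s'` above the other.
-/

theorem NW_finite (q : ℕ) (S : Finset α) : (NW q S).Finite :=
  S.powerset.finite_toSet.subset fun _ hT => mem_coe.2 (mem_powerset.2 hT.1)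

theorem NW_mono {q : ℕ} {S S' : Finset α} (hS : S ⊆ S') (hq : q ≤ #S) :
    NW q S ⊆ NW q S' := fun _ hT =>
  ⟨hT.1.trans hS, by rw [hT.2, min_eq_left hq, min_eq_left (hq.trans (card_le_card hS))]⟩

section UpperBound

variable {pref : Finset α → Finset α → Prop} {q : ℕ} {S X : Finset α}

theorem isStrictOrder_strictPref [IsTrans (Finset α) pref] :
    IsStrictOrder (Finset α) (strictPref pref) where
  irrefl _ h := h.2 h.1
  trans _ _ _ hAB hBC := ⟨_root_.trans hAB.1 hBC.1, fun hCA => hAB.2 (_root_.trans hBC.1 hCA)⟩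

theorem exists_strictPref_of_mem_frontierSet [DecidableEq α] (hub : upperBoundProperty pref q)
    (hq : q ≤ #S) (hX : X ∈ frontierSet pref q S) {T : Finset α} (hT : T ∈ NW q S)
    (hXT : ¬ pref X T) : ∃ W ∈ NW q S, strictPref pref W T := by
  have hXcard : #X = q := hX.1.2.trans (min_eq_left hq)
  have hTcard : #T = q := hT.2.trans (min_eq_left hq)
  have hTX : ¬ pref T X := fun h => hX.2 T hT ⟨h, hXT⟩
  have hunion : NW q (X ∪ T) ⊆ NW q S :=
    NW_mono (union_subset hX.1.1 hT.1) (hXcard.ge.trans (card_le_card subset_union_left))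
  obtain ⟨W, hW, hWX | hWT⟩ := hub X T hXcard hTcard ⟨hXT, hTX⟩
  · exact absurd hWX (hX.2 W (hunion hW))
  · exact ⟨W, hunion hW, hWT⟩

theorem pref_of_mem_frontierSet [DecidableEq α] [IsTrans (Finset α) pref]
    (hub : upperBoundProperty pref q) (hq : q ≤ #S) (hX : X ∈ frontierSet pref q S)
    {T : Finset α} (hT : T ∈ NW q S) : pref X T := by
  have := isStrictOrder_strictPref (pref := pref)
  refine (NW_finite q S).wellFoundedOn.induction (r := strictPref pref) hT fun T hT ih => ?_
  by_contra hXT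
  obtain ⟨W, hW, hWT⟩ := exists_strictPref_of_mem_frontierSet hub hq hX hT hXT
  exact hXT (_root_.trans (ih W hW hWT) hWT.1)

end UpperBound

section ChoiceRule

variable {pref : Finset α → Finset α → Prop} {q : ℕ} {Ch : Finset α → Finset α}
  {S S' : Finset α}

theorem choice_eq_self (hsub : ∀ S, Ch S ⊆ S) (hnw : nonWasteful q Ch) (hS : #S ≤ q) :
    Ch S = S :=
  eq_of_subset_of_card_le (hsub S) ((hnw S).trans (min_eq_right hS)).ge

theorem choice_mem_frontierSet (hsub : ∀ S, Ch S ⊆ S) (hnw : nonWasteful q Ch)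
    (hpd : promotesPref pref Ch) (S : Finset α) : Ch S ∈ frontierSet pref q S :=
  ⟨⟨hsub S, hnw S⟩, fun T hT => hpd S T hT.1 (hT.2.trans (hnw S).symm)⟩

theorem choice_eq_choice_of_maximizers [DecidableEq α] {π : α → α → Prop} [Std.Asymm π]
    (hmax : maximizerProperty pref q) (hne : noJustifiedEnvy pref π Ch)
    (hcard : #(Ch S) = q) (hcard' : #(Ch S') = q) (hS : Ch S ⊆ S') (hS' : Ch S' ⊆ S)
    (hbest : ∀ T ∈ NW q (Ch S ∪ Ch S'), pref (Ch S) T ∧ pref (Ch S') T) : Ch S = Ch S' := by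
  by_contra hdist
  obtain ⟨s, hs, s', hs', hswap, hswap'⟩ := hmax (Ch S) (Ch S') hdist hcard hcard' hbest
  rw [mem_sdiff] at hs hs'
  have hπ : π s s' := hne S s hs.1 s' (mem_sdiff.2 ⟨hS' hs'.1, hs'.2⟩) hswap.1
  have hπ' : π s' s := hne S' s' hs'.1 s (mem_sdiff.2 ⟨hS hs.1, hs.2⟩) hswap'.1
  exact asymm hπ hπ'

theorem choice_eq_of_choice_subset [DecidableEq α] [IsTrans (Finset α) pref]
    {π : α → α → Prop} [Std.Asymm π]
    (hub : upperBoundProperty pref q) (hmax : maximizerProperty pref q)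
    (hsub : ∀ S, Ch S ⊆ S) (hnw : nonWasteful q Ch) (hpd : promotesPref pref Ch)
    (hne : noJustifiedEnvy pref π Ch) (hChS : Ch S ⊆ S') (hS' : S' ⊆ S) : Ch S' = Ch S := by
  rcases le_total #S q with hle | hq
  · have hSS' : S ⊆ S' := choice_eq_self hsub hnw hle ▸ hChS
    rw [hS'.antisymm hSS']
  have hcard : #(Ch S) = q := (hnw S).trans (min_eq_left hq)
  have hq' : q ≤ #S' := hcard.ge.trans (card_le_card hChS)
  have hcard' : #(Ch S') = q := (hnw S').trans (min_eq_left hq')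
  have hunion : NW q (Ch S ∪ Ch S') ⊆ NW q S' :=
    NW_mono (union_subset hChS (hsub S')) (hcard.ge.trans (card_le_card subset_union_left))
  refine (choice_eq_choice_of_maximizers hmax hne hcard hcard' hChS ((hsub S').trans hS')
    fun T hT => ⟨?_, ?_⟩).symm
  · exact pref_of_mem_frontierSet hub hq (choice_mem_frontierSet hsub hnw hpd S)
      (NW_mono hS' hq' (hunion hT))
  · exact pref_of_mem_frontierSet hub hq' (choice_mem_frontierSet hsub hnw hpd S') (hunion hT)

end ChoiceRule

theorem stmt8_general {α : Type*} [DecidableEq α]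
    (q : ℕ) (pref : Finset α → Finset α → Prop) [IsTrans (Finset α) pref]
    (hub : upperBoundProperty pref q) (hmax : maximizerProperty pref q)
    (π : α → α → Prop) [Std.Asymm π]
    (Ch : Finset α → Finset α) (hsub : ∀ S, Ch S ⊆ S)
    (hnw : nonWasteful q Ch) (hpd : promotesPref pref Ch) (hne : noJustifiedEnvy pref π Ch) :
    consistentRule Ch := fun S s _ hs =>
  have hChS : Ch S ⊆ S.erase s := subset_erase.2 ⟨hsub S, hs⟩
  choice_eq_of_choice_subset hub hmax hsub hnw hpd hne hChS (erase_subset s S)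

/-- Under the upper-bound and maximizer properties, any choice
rule that is non-wasteful, promotes the distributional preference, and
guarantees no justified envy w.r.t. `π` is consistent. -/
theorem stmt8 {α : Type*} [Fintype α] [Nonempty α] [DecidableEq α]
    (q : ℕ) (hq : 0 < q)
    (pref : Finset α → Finset α → Prop)
    (hrefl : ∀ A : Finset α, pref A A)
    (htrans : ∀ A B C : Finset α, pref A B → pref B C → pref A C)
    (hub : upperBoundProperty pref q)
    (hmax : maximizerProperty pref q)
    (π : α → α → Prop) (hπ : IsStrictTotalOrder α π)
    (Ch : Finset α → Finset α)
    (hsub : ∀ S : Finset α, Ch S ⊆ S) (hcard : ∀ S : Finset α, (Ch S).card ≤ q)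
    (hnw : nonWasteful q Ch) (hpd : promotesPref pref Ch)
    (hne : noJustifiedEnvy pref π Ch) :
    consistentRule Ch := by
  have : IsTrans (Finset α) pref := ⟨htrans⟩
  exact stmt8_general q pref hub hmax π Ch hsub hnw hpd hne
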